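/- arXiv:0809.3014 — 4 statements merged into one kernel-verified Lean document; each statement's English description precedes it below -/
import Mathlib

section
/- Let G be a signed orientable ribbon graph and let A ⊆ E(G) be any subset of its edges, with partial dual G^A. Then for all positive real numbers x, y, z satisfying xyz² = 1, one has (yz)^{v(G)} · R_s(G; x, y, z) = (yz)^{v(G^A)} · R_s(G^A; x, y, z). -/
/-!
Multiplying the `F`-term of `R_s(G)` by `(yz)^{v(G)}` and using `(xyz²)^{k(F)} = 1` removes `k(F)` and
`v(G)` from the exponents; using `x = (yz²)⁻¹` once more, the term becomes
`x^{-k(G)} · (yz)^{e(F) - 2 s(F)} · z^{-∂(F)}` (`term_eq`). The substitution `F ↦ F ∆ A` is a bijection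
from the states of `G` to those of `G^A`, and it preserves all three exponents:

* `∂`, because `α_A ∘ α_{F ∆ A} = α_F` (`edgeInv_mul_symmDiff`);
* `k(G)`, because `α_A d ∈ {d, α d}` for every dart `d`, so that `σ, α` and `σ ∘ α_A, α` generate groups
  with the same orbits (`kC_pdPerm_univ`);
* `e(F) - 2 s(F) = e₊(F) + e₋(E ∖ F)`, because an edge of `A` changes both its sign and its membership in
  the state (`card_sub_two_sC_symmDiff`).
-/

open Finset

noncomputable section

/-- A signed orientable ribbon graph (combinatorial map) is encoded with dart set
`E × Bool` (each edge `e : E` carries the two darts `(e, false)` and `(e, true)`),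
a permutation `σ` of the darts recording the cyclic order of darts around the
vertices, the fixed-point-free involution `α = edgeInv Finset.univ` pairing the two
darts of each edge, and a sign function `ε : E → ℤ` (with values `1` or `-1`).

`edgeInv A` is the involution `α_A` agreeing with `α` on the darts of edges in `A`
and fixing all other darts. -/
def edgeInv {E : Type*} [DecidableEq E] (A : Finset E) : Equiv.Perm (E × Bool) :=
  Function.Involutive.toPerm (fun d => if d.1 ∈ A then (d.1, !d.2) else d)
    (by intro d; by_cases h : d.1 ∈ A <;> simp [h])

/-- The number of orbits on `D` of the subgroup generated by a set of permutations. -/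
def orbitCount {D : Type*} [Fintype D] (S : Set (Equiv.Perm D)) : ℕ :=
  Nat.card (MulAction.orbitRel.Quotient (Subgroup.closure S) D)

variable {E : Type*} [Fintype E] [DecidableEq E]

/-- `v(G)`: the number of cycles of `σ` (vertices of the ribbon graph). -/
def vG (σ : Equiv.Perm (E × Bool)) : ℕ := orbitCount {σ}

/-- `e(G)`: the number of edges (`α`-orbits of darts). -/
def eG (_σ : Equiv.Perm (E × Bool)) : ℕ := Fintype.card E

/-- `k(F)`: the number of orbits of the subgroup generated by `σ` and `α_F`
(connected components of the spanning ribbon subgraph with edge set `F`). -/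
def kC (σ : Equiv.Perm (E × Bool)) (F : Finset E) : ℕ := orbitCount {σ, edgeInv F}

/-- `∂(F)`: the number of cycles of `σ ∘ α_F` (boundary components of the spanning
ribbon subgraph with edge set `F`). -/
def bC (σ : Equiv.Perm (E × Bool)) (F : Finset E) : ℕ := orbitCount {σ * edgeInv F}

/-- `e₋(F)`: the number of negative edges in `F`. -/
def eNeg (ε : E → ℤ) (F : Finset E) : ℕ := (F.filter fun e => ε e = -1).card

/-- `e₊(F)`: the number of positive edges in `F`. -/
def ePos (ε : E → ℤ) (F : Finset E) : ℕ := (F.filter fun e => ε e = 1).card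

/-- `r(F) = v(G) − k(F)`, as a real number. -/
def rC (σ : Equiv.Perm (E × Bool)) (F : Finset E) : ℝ := (vG σ : ℝ) - (kC σ F : ℝ)

/-- `n(F) = e(F) − r(F)`, as a real number. -/
def nC (σ : Equiv.Perm (E × Bool)) (F : Finset E) : ℝ := (F.card : ℝ) - rC σ F

/-- The sign function of a state: `s(F) = ½(e₋(F) − e₋(E(G)∖F))`. -/
def sC (ε : E → ℤ) (F : Finset E) : ℝ :=
  ((eNeg ε F : ℝ) - (eNeg ε (Finset.univ \ F) : ℝ)) / 2

/-- The signed ribbon graph polynomial `R_s(G; x, y, z)` (real exponents via `rpow`). -/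
def Rs (σ : Equiv.Perm (E × Bool)) (ε : E → ℤ) (x y z : ℝ) : ℝ :=
  ∑ F : Finset E,
    x ^ (rC σ Finset.univ - rC σ F + sC ε F) * y ^ (nC σ F - sC ε F) *
      z ^ ((kC σ F : ℝ) - (bC σ F : ℝ) + nC σ F)

/-- The vertex permutation `σ ∘ α_A` of the partial dual `G^A`. -/
def pdPerm (σ : Equiv.Perm (E × Bool)) (A : Finset E) : Equiv.Perm (E × Bool) :=
  σ * edgeInv A

/-- The sign function of the partial dual `G^A`: signs of edges in `A` are reversed. -/
def pdSign (ε : E → ℤ) (A : Finset E) : E → ℤ := fun e => if e ∈ A then -ε e else ε e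

theorem edgeInv_apply {E : Type*} [DecidableEq E] (A : Finset E) (d : E × Bool) :
    edgeInv A d = if d.1 ∈ A then (d.1, !d.2) else d := rfl

theorem edgeInv_mul_symmDiff {E : Type*} [DecidableEq E] (A F : Finset E) :
    edgeInv A * edgeInv (symmDiff F A) = edgeInv F := by
  ext1 d
  rcases d with ⟨e, b⟩
  by_cases hA : e ∈ A <;> by_cases hF : e ∈ F <;>
    simp [edgeInv_apply, Finset.mem_symmDiff, hA, hF]

theorem edgeInv_mul_self {E : Type*} [DecidableEq E] (A : Finset E) : edgeInv A * edgeInv A = 1 := by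
  ext1 d
  rcases d with ⟨e, b⟩
  by_cases hA : e ∈ A <;> simp [edgeInv_apply, hA]

theorem bC_pdPerm (σ : Equiv.Perm (E × Bool)) (A F : Finset E) :
    bC (pdPerm σ A) (symmDiff F A) = bC σ F := by
  unfold bC pdPerm
  rw [mul_assoc, edgeInv_mul_symmDiff]

/-- It suffices to compare orbits on generators, even when neither generated group contains the other. -/
theorem orbitRel_closure_le {D : Type*} {S T : Set (Equiv.Perm D)}
    (h : ∀ g ∈ S, ∀ d, MulAction.orbitRel (Subgroup.closure T) D (g d) d) :
    MulAction.orbitRel (Subgroup.closure S) D ≤ MulAction.orbitRel (Subgroup.closure T) D := by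
  have key : ∀ g ∈ Subgroup.closure S, ∀ d,
      MulAction.orbitRel (Subgroup.closure T) D (g d) d := by
    intro g hg
    induction hg using Subgroup.closure_induction with
    | mem g hg => exact h g hg
    | one => exact fun d => Setoid.refl' _ d
    | mul a b _ _ ha hb => exact fun d => Setoid.trans' _ (ha (b d)) (hb d)
    | inv a _ ha =>
      intro d
      have := ha (a⁻¹ d)
      rw [show a (a⁻¹ d) = d from Equiv.apply_symm_apply a d] at this
      exact Setoid.symm' _ this
  intro a b hab
  obtain ⟨g, rfl⟩ := hab
  exact key g.1 g.2 b

theorem orbitRel_of_mem {D : Type*} {T : Set (Equiv.Perm D)} {g : Equiv.Perm D} (hg : g ∈ T)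
    (d : D) : MulAction.orbitRel (Subgroup.closure T) D (g d) d :=
  ⟨⟨g, Subgroup.subset_closure hg⟩, rfl⟩

/-- Holds because `α_A d` is `d` or `α d`. Applied to `G^A` in the role of `G`, it also yields the reverse
inequality, since `(G^A)^A = G`. -/
theorem orbitRel_pdPerm_le (σ : Equiv.Perm (E × Bool)) (A : Finset E) :
    MulAction.orbitRel (Subgroup.closure {pdPerm σ A, edgeInv Finset.univ}) (E × Bool) ≤
      MulAction.orbitRel (Subgroup.closure {σ, edgeInv Finset.univ}) (E × Bool) := by
  apply orbitRel_closure_le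
  intro g hg d
  rcases hg with rfl | rfl
  · have h1 := orbitRel_of_mem (T := {σ, edgeInv Finset.univ}) (Set.mem_insert _ _) (edgeInv A d)
    refine Setoid.trans' _ h1 ?_
    by_cases hd : d.1 ∈ A
    · have h2 := orbitRel_of_mem (T := {σ, edgeInv Finset.univ}) (g := edgeInv Finset.univ)
        (Set.mem_insert_of_mem _ (Set.mem_singleton _)) d
      have h3 : edgeInv A d = edgeInv Finset.univ d := by simp [edgeInv_apply, hd]
      exact h3 ▸ h2
    · have h3 : edgeInv A d = d := by simp [edgeInv_apply, hd]
      exact h3.symm ▸ Setoid.refl' _ d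
  · exact orbitRel_of_mem (g := edgeInv Finset.univ)
      (Set.mem_insert_of_mem _ (Set.mem_singleton _)) d

theorem kC_pdPerm_univ (σ : Equiv.Perm (E × Bool)) (A : Finset E) :
    kC (pdPerm σ A) Finset.univ = kC σ Finset.univ := by
  have h : MulAction.orbitRel (Subgroup.closure {pdPerm σ A, edgeInv Finset.univ}) (E × Bool) =
      MulAction.orbitRel (Subgroup.closure {σ, edgeInv Finset.univ}) (E × Bool) := by
    apply le_antisymm (orbitRel_pdPerm_le σ A)
    have h2 := orbitRel_pdPerm_le (pdPerm σ A) A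
    have h3 : pdPerm (pdPerm σ A) A = σ := by
      unfold pdPerm
      rw [mul_assoc, edgeInv_mul_self, mul_one]
    rwa [h3] at h2
  unfold kC orbitCount MulAction.orbitRel.Quotient
  rw [h]

/-- `e(F) - 2 s(F)` counts the positive edges in `F` and the negative edges outside `F`. -/
theorem card_sub_two_sC (ε : E → ℤ) (hε : ∀ e, ε e = 1 ∨ ε e = -1) (F : Finset E) :
    (F.card : ℝ) - 2 * sC ε F = ∑ e : E, if (e ∈ F ↔ ε e = 1) then (1 : ℝ) else 0 := by
  have h1 : (F.card : ℝ) = ∑ e : E, if e ∈ F then (1 : ℝ) else 0 := by simp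
  have h2 : (eNeg ε F : ℝ) = ∑ e : E, if e ∈ F ∧ ε e = -1 then (1 : ℝ) else 0 := by
    rw [Finset.sum_boole, eNeg]
    congr 2
    ext e
    simp
  have h3 : (eNeg ε (Finset.univ \ F) : ℝ) =
      ∑ e : E, if e ∉ F ∧ ε e = -1 then (1 : ℝ) else 0 := by
    rw [Finset.sum_boole, eNeg]
    congr 2
    ext e
    simp
  have h4 : (F.card : ℝ) - 2 * sC ε F =
      F.card - eNeg ε F + eNeg ε (Finset.univ \ F) := by
    unfold sC
    ring
  rw [h4, h1, h2, h3, ← Finset.sum_sub_distrib, ← Finset.sum_add_distrib]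
  refine Finset.sum_congr rfl fun e _ => ?_
  by_cases hF : e ∈ F <;> rcases hε e with h | h <;> simp [hF, h]

theorem card_sub_two_sC_symmDiff (ε : E → ℤ) (hε : ∀ e, ε e = 1 ∨ ε e = -1) (A F : Finset E) :
    ((symmDiff F A).card : ℝ) - 2 * sC (pdSign ε A) (symmDiff F A) = F.card - 2 * sC ε F := by
  have hε' : ∀ e, pdSign ε A e = 1 ∨ pdSign ε A e = -1 := by
    intro e
    unfold pdSign
    by_cases hA : e ∈ A <;> rcases hε e with h | h <;> simp [hA, h]
  rw [card_sub_two_sC ε hε, card_sub_two_sC _ hε']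
  refine Finset.sum_congr rfl fun e _ => ?_
  by_cases hA : e ∈ A <;> by_cases hF : e ∈ F <;> rcases hε e with h | h <;>
    simp [hA, hF, h, pdSign, Finset.mem_symmDiff]

/-- On the surface `xyz² = 1`, the normalized contribution of a state depends only on `k(G)`,
`e(F) - 2 s(F)` and `∂(F)`. -/
theorem term_eq (σ : Equiv.Perm (E × Bool)) (ε : E → ℤ) (F : Finset E) {x y z : ℝ}
    (hx : 0 < x) (hy : 0 < y) (hz : 0 < z) (hxyz : x * y * z ^ 2 = 1) :
    (y * z) ^ vG σ * (x ^ (rC σ Finset.univ - rC σ F + sC ε F) * y ^ (nC σ F - sC ε F) *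
      z ^ ((kC σ F : ℝ) - (bC σ F : ℝ) + nC σ F)) =
    x ^ (-(kC σ Finset.univ : ℝ)) * (y * z) ^ ((F.card : ℝ) - 2 * sC ε F) *
      z ^ (-(bC σ F : ℝ)) := by
  have hl : Real.log x = -Real.log y - 2 * Real.log z := by
    have h := congrArg Real.log hxyz
    rw [Real.log_mul (by positivity) (by positivity), Real.log_mul hx.ne' hy.ne', Real.log_pow,
      Real.log_one] at h
    push_cast at h
    linarith
  have hyz : Real.log (y * z) = Real.log y + Real.log z := Real.log_mul hy.ne' hz.ne'
  rw [← Real.rpow_natCast]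
  simp only [Real.rpow_def_of_pos hx, Real.rpow_def_of_pos hy, Real.rpow_def_of_pos hz,
    Real.rpow_def_of_pos (mul_pos hy hz), ← Real.exp_add, hl, hyz]
  congr 1
  unfold nC rC
  ring

/-- **Chmutov's partial duality theorem.** For a signed orientable ribbon graph `G`
and any `A ⊆ E(G)`, and all positive reals `x, y, z` with `xyz² = 1`,
`(yz)^{v(G)} · R_s(G; x,y,z) = (yz)^{v(G^A)} · R_s(G^A; x,y,z)`. -/
theorem partial_duality (E : Type*) [Fintype E] [DecidableEq E]
    (σ : Equiv.Perm (E × Bool)) (ε : E → ℤ) (hε : ∀ e, ε e = 1 ∨ ε e = -1)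
    (A : Finset E) (x y z : ℝ) (hx : 0 < x) (hy : 0 < y) (hz : 0 < z)
    (hxyz : x * y * z ^ 2 = 1) :
    (y * z) ^ vG σ * Rs σ ε x y z =
      (y * z) ^ vG (pdPerm σ A) * Rs (pdPerm σ A) (pdSign ε A) x y z := by
  unfold Rs
  rw [Finset.mul_sum, Finset.mul_sum]
  have hinv : Function.Involutive fun F : Finset E => symmDiff F A := fun F =>
    symmDiff_symmDiff_cancel_right A F
  refine Fintype.sum_equiv hinv.toPerm _ _ fun F => ?_
  rw [term_eq σ ε F hx hy hz hxyz, term_eq (pdPerm σ A) (pdSign ε A) _ hx hy hz hxyz]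
  simp only [Function.Involutive.coe_toPerm]
  rw [kC_pdPerm_univ, card_sub_two_sC_symmDiff ε hε, bC_pdPerm]

end
end

section
/- For every signed orientable ribbon graph G and all positive real numbers a, b, c, the signed ribbon graph polynomial admits the Potts-model-type state sum R_s(G; ac/b, bc, 1/c) = (b/(ac))^{k(G)} · b^{−v(G)} · (b·a^{−1/2})^{e_−(G)} · Σ_{F ⊆ E(G)} a^{k(F)} · c^{∂(F)} · Π_{e ∈ F} ω_e, where ω_e = b if the edge e has sign +1 and ω_e = a/b if the edge e has sign −1. -/
/-!
The identity holds state by state. At `x = ac/b`, `y = bc`, `z = 1/c` the summand of a state `F` is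
a monomial in `a`, `b`, `c`, and so is the corresponding term on the right once the product of the
weights is written as `b ^ e₊(F) * (a / b) ^ e₋(F)`. With `n(F) = e₊(F) + e₋(F) - v(G) + k(F)` and
`s(F) = e₋(F) - e₋(G) / 2`, both sides have exponent `k(F) - k(G) + s(F)` in `a`,
`k(G) - v(G) + e(F) - 2 s(F)` in `b`, and `∂(F) - k(G)` in `c`. Positivity allows writing
`a`, `b`, `c` as exponentials, which turns the comparison into a linear identity in the exponents.
No relation between `k`, `∂` and `v` is needed.
-/

open Finset

noncomputable section

variable {E : Type*} [Fintype E] [DecidableEq E]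

lemma card_eq_ePos_add_eNeg (E : Type*) [DecidableEq E] (ε : E → ℤ)
    (hε : ∀ e, ε e = 1 ∨ ε e = -1) (F : Finset E) :
    F.card = ePos ε F + eNeg ε F := by
  have hfil : (F.filter fun e => ε e = -1) = F.filter fun e => ¬ ε e = 1 := by
    apply Finset.filter_congr
    intro e _
    rcases hε e with h | h <;> simp [h]
  rw [ePos, eNeg, hfil, Finset.card_filter_add_card_filter_not]

lemma prod_weight (E : Type*) [DecidableEq E] (ε : E → ℤ)
    (hε : ∀ e, ε e = 1 ∨ ε e = -1) (F : Finset E) (p q : ℝ) :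
    ∏ e ∈ F, (if ε e = 1 then p else q) = p ^ (ePos ε F : ℝ) * q ^ (eNeg ε F : ℝ) := by
  have hfil : (F.filter fun e => ¬ ε e = 1) = F.filter fun e => ε e = -1 := by
    apply Finset.filter_congr
    intro e _
    rcases hε e with h | h <;> simp [h]
  rw [Finset.prod_ite, Finset.prod_const, Finset.prod_const, hfil, Real.rpow_natCast,
    Real.rpow_natCast]
  rfl

/-- The sign function in the form `s(F) = e₋(F) - e₋(G) / 2`. -/
lemma sC_eq (E : Type*) [Fintype E] [DecidableEq E] (ε : E → ℤ) (F : Finset E) :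
    sC ε F = (eNeg ε F : ℝ) - (eNeg ε Finset.univ : ℝ) / 2 := by
  have h : eNeg ε F + eNeg ε (Finset.univ \ F) = eNeg ε Finset.univ := by
    unfold eNeg
    rw [← Finset.card_union_of_disjoint
      (Finset.disjoint_filter_filter Finset.disjoint_sdiff), ← Finset.filter_union,
      Finset.union_sdiff_of_subset (Finset.subset_univ F)]
  have h' : (eNeg ε F : ℝ) + (eNeg ε (Finset.univ \ F) : ℝ) = eNeg ε Finset.univ := by
    exact_mod_cast h
  rw [sC, ← h']
  ring

/-- The Potts-model-type state sum for the signed ribbon graph polynomial: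
`R_s(G; ac/b, bc, 1/c) = (b/(ac))^{k(G)} b^{−v(G)} (b·a^{−1/2})^{e₋(G)}
  Σ_F a^{k(F)} c^{∂(F)} Π_{e ∈ F} ω_e`,
where `ω_e = b` for positive edges and `ω_e = a/b` for negative edges. -/
theorem Rs_potts (E : Type*) [Fintype E] [DecidableEq E]
    (σ : Equiv.Perm (E × Bool)) (ε : E → ℤ) (hε : ∀ e, ε e = 1 ∨ ε e = -1)
    (a b c : ℝ) (ha : 0 < a) (hb : 0 < b) (hc : 0 < c) :
    Rs σ ε (a * c / b) (b * c) (1 / c) =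
      (b / (a * c)) ^ (kC σ Finset.univ : ℝ) * b ^ (-(vG σ : ℝ)) *
        (b * a ^ (-(1 / 2) : ℝ)) ^ (eNeg ε Finset.univ : ℝ) *
        ∑ F : Finset E,
          a ^ (kC σ F : ℝ) * c ^ (bC σ F : ℝ) *
            ∏ e ∈ F, (if ε e = 1 then b else a / b) := by
  rw [Rs, Finset.mul_sum]
  refine Finset.sum_congr rfl fun F _ => ?_
  rw [prod_weight E ε hε, nC, rC, rC, sC_eq, card_eq_ePos_add_eNeg E ε hε F]
  obtain ⟨A, rfl⟩ : ∃ A, a = Real.exp A := ⟨Real.log a, (Real.exp_log ha).symm⟩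
  obtain ⟨B, rfl⟩ : ∃ B, b = Real.exp B := ⟨Real.log b, (Real.exp_log hb).symm⟩
  obtain ⟨C, rfl⟩ : ∃ C, c = Real.exp C := ⟨Real.log c, (Real.exp_log hc).symm⟩
  simp only [one_div, ← Real.exp_neg, ← Real.exp_add, ← Real.exp_sub, ← Real.exp_mul]
  congr 1
  push_cast
  ring

end
end

section
/- Let G be a signed orientable ribbon graph and A ⊆ E(G), with partial dual G^A. Then for all positive real numbers b and c, b^{e_−(G)} · Σ_{F ⊆ E(G)} b^{e_+(F)−e_−(F)} · c^{∂_G(F)} = b^{e_−(G^A)} · Σ_{F ⊆ E(G^A)} b^{e_+(F)−e_−(F)} · c^{∂_{G^A}(F)}, where ∂_G and ∂_{G^A} denote the boundary-component counts of states computed in G and in G^A respectively, and the sign counts e_± of states of G^A are taken with respect to the sign function of G^A. (This identity is the combinatorial content, after cancelling equal prefactors, of the equality of the homfly polynomials of the links associated to G and G^A.) -/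
/-!
The bijection `F ↦ F ∆ A` from states of `G` to states of `G^A` matches the two sums term by term.
Since `α_A ∘ α_B = α_{A ∆ B}` (`edgeInv_mul_edgeInv`), the boundary permutation of `F ∆ A` in `G^A`
is `σ ∘ α_A ∘ α_{F ∆ A} = σ ∘ α_F`, so boundary components agree. The total exponent of `b`, namely
`e₋(G) + e₊(F) - e₋(F)`, counts the edges that are positive in `F` or negative outside `F`; flipping
both the sign and the membership of the edges of `A` preserves this count (`exponent_symmDiff`).
-/

open Finset

noncomputable section

variable {E : Type*} [Fintype E] [DecidableEq E]

theorem edgeInv_mul_edgeInv {E : Type*} [DecidableEq E] (A B : Finset E) :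
    edgeInv A * edgeInv B = edgeInv (symmDiff A B) := by
  ext1 d
  by_cases hA : d.1 ∈ A <;> by_cases hB : d.1 ∈ B <;>
    simp [edgeInv_apply, Finset.mem_symmDiff, hA, hB]

/-- The exponent of `b` attached to a state is a sum of local contributions of the edges, each of
which is unchanged when both the sign and the membership of the edge are flipped. -/
theorem exponent_symmDiff {E : Type*} [Fintype E] [DecidableEq E] (ε : E → ℤ)
    (hε : ∀ e, ε e = 1 ∨ ε e = -1) (A F : Finset E) :
    (eNeg (pdSign ε A) Finset.univ : ℝ) +
        ((ePos (pdSign ε A) (symmDiff F A) : ℝ) - (eNeg (pdSign ε A) (symmDiff F A) : ℝ)) =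
      (eNeg ε Finset.univ : ℝ) + ((ePos ε F : ℝ) - (eNeg ε F : ℝ)) := by
  have key : ∀ (P : E → Prop) [DecidablePred P] (S : Finset E),
      ((S.filter P).card : ℝ) = ∑ e : E, if e ∈ S ∧ P e then (1 : ℝ) else 0 := by
    intro P _ S
    rw [Finset.sum_boole]
    congr 2
    ext e
    simp
  simp only [eNeg, ePos, key, ← Finset.sum_sub_distrib, ← Finset.sum_add_distrib]
  refine Finset.sum_congr rfl fun e _ => ?_
  by_cases hA : e ∈ A <;> by_cases hF : e ∈ F <;> rcases hε e with h | h <;>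
    norm_num [pdSign, Finset.mem_symmDiff, hA, hF, h]

/-- Invariance of the (combinatorial content of the) homfly polynomial under
partial duality: for all positive reals `b` and `c`,
`b^{e₋(G)} Σ_{F ⊆ E(G)} b^{e₊(F)−e₋(F)} c^{∂_G(F)}
  = b^{e₋(G^A)} Σ_{F ⊆ E(G^A)} b^{e₊(F)−e₋(F)} c^{∂_{G^A}(F)}`. -/
theorem homfly_partial_dual_invariance (E : Type*) [Fintype E] [DecidableEq E]
    (σ : Equiv.Perm (E × Bool)) (ε : E → ℤ) (hε : ∀ e, ε e = 1 ∨ ε e = -1)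
    (A : Finset E) (b c : ℝ) (hb : 0 < b) (hc : 0 < c) :
    b ^ (eNeg ε Finset.univ : ℝ) *
        ∑ F : Finset E,
          b ^ ((ePos ε F : ℝ) - (eNeg ε F : ℝ)) * c ^ (bC σ F : ℝ) =
      b ^ (eNeg (pdSign ε A) Finset.univ : ℝ) *
        ∑ F : Finset E,
          b ^ ((ePos (pdSign ε A) F : ℝ) - (eNeg (pdSign ε A) F : ℝ)) *
            c ^ (bC (pdPerm σ A) F : ℝ) := by
  rw [Finset.mul_sum, Finset.mul_sum]
  refine Fintype.sum_equiv (symmDiff_left_involutive A).toPerm _ _ fun F => ?_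
  have hbC : bC (pdPerm σ A) (symmDiff F A) = bC σ F := by
    rw [bC, bC, pdPerm, mul_assoc, edgeInv_mul_edgeInv, symmDiff_comm F A,
      symmDiff_symmDiff_cancel_left]
  simp only [Function.Involutive.coe_toPerm]
  rw [hbC, ← mul_assoc, ← mul_assoc, ← Real.rpow_add hb, ← Real.rpow_add hb,
    exponent_symmDiff ε hε]

end
end

section
/- Let G be a signed orientable ribbon graph. Then for all positive real numbers x, y, z satisfying xyz² = 1, (yz)^{v(G)} · R_s(G; x, y, z) = (yz²)^{k(G)} · (yz)^{e_−(G)} · Σ_{F ⊆ E(G)} z^{−∂(F)} · (yz)^{e_+(F)−e_−(F)}. In particular, along the surface xyz² = 1 the normalized polynomial (yz)^{v(G)} R_s(G; x, y, z) is determined by k(G), e_−(G), and the collection of pairs (∂(F), e_+(F) − e_−(F)) over states F of G. -/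
/-!
On the surface `x y z² = 1` one has `log x = -log y - 2 log z`. After multiplication by
`(yz)^{v(G)}`, the summand of a state `F` becomes `exp` of a combination of `log y` and `log z`
in which `k(F)`, the only global invariant of `F` besides `∂(F)`, cancels: the coefficients are
`k(G) + e(F) - 2 s(F)` and `2 k(G) + e(F) - 2 s(F) - ∂(F)`.  Splitting edges by sign inside `F`
and across `F` and its complement gives `e(F) - 2 s(F) = e₊(F) - e₋(F) + e₋(G)`
(`card_sub_two_mul_sC`), so the identity holds term by term.
-/

open Finset

noncomputable section

variable {E : Type*} [Fintype E] [DecidableEq E]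

theorem ePos_add_eNeg {E : Type*} (ε : E → ℤ) (hε : ∀ e, ε e = 1 ∨ ε e = -1) (F : Finset E) :
    ePos ε F + eNeg ε F = F.card := by
  rw [ePos, eNeg, ← Finset.card_filter_add_card_filter_not (s := F) (fun e => ε e = 1)]
  congr 2
  refine Finset.filter_congr fun e _ => ?_
  rcases hε e with h | h <;> simp [h]

theorem eNeg_add_compl {E : Type*} [Fintype E] [DecidableEq E] (ε : E → ℤ) (F : Finset E) :
    eNeg ε F + eNeg ε (Finset.univ \ F) = eNeg ε Finset.univ := by
  unfold eNeg
  rw [← Finset.card_union_of_disjoint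
    (Finset.disjoint_filter_filter Finset.disjoint_sdiff), ← Finset.filter_union,
    Finset.union_sdiff_of_subset (Finset.subset_univ F)]

/-- The sign function converts edge counts into the sign imbalance of `F`, up to the constant
`e₋(G)`. This is the only place where `ε` being `±1`-valued enters. -/
theorem card_sub_two_mul_sC {E : Type*} [Fintype E] [DecidableEq E]
    (ε : E → ℤ) (hε : ∀ e, ε e = 1 ∨ ε e = -1) (F : Finset E) :
    (F.card : ℝ) - 2 * sC ε F = (ePos ε F : ℝ) - eNeg ε F + eNeg ε Finset.univ := by
  rw [← ePos_add_eNeg ε hε F, ← eNeg_add_compl ε F, sC]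
  push_cast
  ring

/-- Along the surface `xyz² = 1`, the normalized signed ribbon graph polynomial is
`(yz)^{v(G)} R_s(G; x,y,z)
  = (yz²)^{k(G)} (yz)^{e₋(G)} Σ_F z^{−∂(F)} (yz)^{e₊(F)−e₋(F)}`;
in particular it is determined by `k(G)`, `e₋(G)` and the pairs
`(∂(F), e₊(F) − e₋(F))` over states `F` of `G`. -/
theorem normalized_Rs_on_surface (E : Type*) [Fintype E] [DecidableEq E]
    (σ : Equiv.Perm (E × Bool)) (ε : E → ℤ) (hε : ∀ e, ε e = 1 ∨ ε e = -1)
    (x y z : ℝ) (hx : 0 < x) (hy : 0 < y) (hz : 0 < z)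
    (hxyz : x * y * z ^ 2 = 1) :
    (y * z) ^ vG σ * Rs σ ε x y z =
      (y * z ^ 2) ^ kC σ Finset.univ * (y * z) ^ eNeg ε Finset.univ *
        ∑ F : Finset E,
          z ^ (-(bC σ F : ℝ)) * (y * z) ^ ((ePos ε F : ℝ) - (eNeg ε F : ℝ)) := by
  have hyz : 0 < y * z := mul_pos hy hz
  have hyz2 : 0 < y * z ^ 2 := by positivity
  have hlog : Real.log x = -Real.log y - 2 * Real.log z := by
    have h := congrArg Real.log hxyz
    rw [Real.log_mul (by positivity) (by positivity), Real.log_mul hx.ne' hy.ne',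
      Real.log_pow, Real.log_one] at h
    push_cast at h
    linarith
  have hlyz : Real.log (y * z) = Real.log y + Real.log z := Real.log_mul hy.ne' hz.ne'
  have hlyz2 : Real.log (y * z ^ 2) = Real.log y + 2 * Real.log z := by
    rw [Real.log_mul hy.ne' (by positivity), Real.log_pow]
    push_cast
    ring
  rw [Rs, Finset.mul_sum, Finset.mul_sum]
  refine Finset.sum_congr rfl fun F _ => ?_
  have hs := card_sub_two_mul_sC ε hε F
  simp only [← Real.rpow_natCast (y * z), ← Real.rpow_natCast (y * z ^ 2)]
  simp only [Real.rpow_def_of_pos hx, Real.rpow_def_of_pos hy, Real.rpow_def_of_pos hz,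
    Real.rpow_def_of_pos hyz, Real.rpow_def_of_pos hyz2, ← Real.exp_add]
  rw [hlog, hlyz, hlyz2, nC, rC, rC]
  congr 1
  linear_combination (Real.log y + Real.log z) * hs

end
end
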